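/- arXiv:2111.10301 — 3 statements merged into one kernel-verified Lean document; each statement's English description precedes it below -/
import Mathlib

section
/- Let x : [0,1] → ℝ be a nonconstant continuous function. Define q⁻ := sup{p > 0 : liminf_{n→∞} V_n^{(p)}(x) = ∞} and q⁺ := sup{p > 0 : limsup_{n→∞} V_n^{(p)}(x) = ∞}. Then q⁻ = inf{p ≥ 1 : liminf_{n→∞} V_n^{(p)}(x) = 0} and q⁺ = inf{p ≥ 1 : limsup_{n→∞} V_n^{(p)}(x) = 0}. -/
/-!
By uniform continuity the dyadic increments of `x` tend to `0` uniformly. Splitting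
`a ^ q = a ^ (q - p) * a ^ p` therefore gives `V_n^{(q)} = o(V_n^{(p)})` whenever `0 ≤ p < q`, so
once the lower (upper) limit of `V_n^{(p)}` is finite, that of `V_n^{(q)}` vanishes for every
`q > p`: the limit jumps from `∞` to `0` at a single critical exponent.

Telescoping bounds `V_n^{(1)}` below by `|x s - x 0|`, up to an error tending to `0`, for every
`s ∈ [0, 1]`. As `x` is not constant, `V_n^{(p)} → ∞` for `0 ≤ p < 1`; the critical exponent is
thus at least `1`, and the infimum loses nothing by being restricted to `1 ≤ p`.
-/

open Filter Finset

noncomputable section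

/-- The `n`-th dyadic `p`-th variation of `x`. -/
def dyadicVar (x : ℝ → ℝ) (p : ℝ) (n : ℕ) : ℝ :=
  ∑ k ∈ Finset.range (2 ^ n), |x (((k : ℝ) + 1) / 2 ^ n) - x ((k : ℝ) / 2 ^ n)| ^ p

/-- `x` is nonconstant on `[0,1]`. -/
def Nonconstant (x : ℝ → ℝ) : Prop :=
  ∃ s ∈ Set.Icc (0 : ℝ) 1, ∃ t ∈ Set.Icc (0 : ℝ) 1, x s ≠ x t

open Asymptotics Topology

section CriticalExponent

theorem sSup_coe_image_eq_sInf_coe_image {A B : Set ℝ} (hle : ∀ a ∈ A, ∀ b ∈ B, a ≤ b)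
    (hgap : ∀ c d, c < d → (∃ a ∈ A, c ≤ a) ∨ ∃ b ∈ B, b ≤ d) :
    sSup ((fun p : ℝ => (p : EReal)) '' A) = sInf ((fun p : ℝ => (p : EReal)) '' B) := by
  apply le_antisymm
  · exact sSup_le (Set.forall_mem_image.2 fun a ha => le_sInf (Set.forall_mem_image.2 fun b hb =>
      EReal.coe_le_coe_iff.2 (hle a ha b hb)))
  · refine not_lt.1 fun hlt => ?_
    obtain ⟨c, hAc, hcB⟩ := EReal.lt_iff_exists_real_btwn.1 hlt
    obtain ⟨d, hcd, hdB⟩ := EReal.lt_iff_exists_real_btwn.1 hcB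
    rcases hgap c d (EReal.coe_lt_coe_iff.1 hcd) with ⟨a, ha, hca⟩ | ⟨b, hb, hbd⟩
    · exact (EReal.coe_le_coe_iff.2 hca).not_gt
        ((le_sSup (Set.mem_image_of_mem _ ha)).trans_lt hAc)
    · exact (EReal.coe_le_coe_iff.2 hbd).not_gt
        (hdB.trans_le (sInf_le (Set.mem_image_of_mem _ hb)))

theorem sSup_eq_top_eq_sInf_eq_zero_of_jump {L : ℝ → EReal} {r : ℝ} (hr : 0 < r)
    (htop : ∀ p, 0 < p → p < r → L p = ⊤)
    (hjump : ∀ p q, r ≤ p → p < q → L p ≠ ⊤ → L q = 0) :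
    sSup ((fun p : ℝ => (p : EReal)) '' {p : ℝ | 0 < p ∧ L p = ⊤}) =
      sInf ((fun p : ℝ => (p : EReal)) '' {p : ℝ | r ≤ p ∧ L p = 0}) := by
  apply sSup_coe_image_eq_sInf_coe_image
  · rintro a ⟨-, ha⟩ b ⟨hrb, hb⟩
    refine not_lt.1 fun hba => EReal.zero_ne_top ?_
    rw [← hjump b a hrb hba (hb ▸ EReal.zero_ne_top), ha]
  · intro c d hcd
    rcases lt_or_ge c r with hcr | hrc
    · obtain ⟨a, hca, har⟩ := exists_between (max_lt hcr hr)
      have ha : 0 < a := (le_max_right c 0).trans_lt hca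
      exact .inl ⟨a, ⟨ha, htop a ha har⟩, (le_max_left c 0).trans hca.le⟩
    · by_cases hc : L c = ⊤
      · exact .inl ⟨c, ⟨hr.trans_le hrc, hc⟩, le_rfl⟩
      · exact .inr ⟨d, ⟨hrc.trans hcd.le, hjump c d hrc hcd hc⟩, le_rfl⟩

end CriticalExponent

section LittleO

variable {α : Type*} {l : Filter α} {f g : α → ℝ}

theorem tendsto_coe_zero_of_isLittleO_of_eventually_lt (hfg : f =o[l] g)
    (hg : ∀ᶠ i in l, 0 ≤ g i) {M : ℝ} (hM : ∀ᶠ i in l, (g i : EReal) < M) :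
    Tendsto (fun i => (f i : EReal)) l (𝓝 0) := by
  have hbdd : g =O[l] fun _ => (1 : ℝ) := by
    refine IsBigO.of_bound M ?_
    filter_upwards [hg, hM] with i hi hiM
    simpa only [Real.norm_of_nonneg hi, norm_one, mul_one] using (EReal.coe_lt_coe_iff.1 hiM).le
  exact EReal.tendsto_coe.2 ((isLittleO_one_iff ℝ).1 (hfg.trans_isBigO hbdd))

theorem limsup_coe_eq_zero_of_isLittleO [l.NeBot] (hfg : f =o[l] g) (hg : ∀ᶠ i in l, 0 ≤ g i)
    (hsup : limsup (fun i => (g i : EReal)) l ≠ ⊤) :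
    limsup (fun i => (f i : EReal)) l = 0 := by
  obtain ⟨M, hM, -⟩ := EReal.lt_iff_exists_real_btwn.1 (lt_top_iff_ne_top.2 hsup)
  exact (tendsto_coe_zero_of_isLittleO_of_eventually_lt hfg hg
    (eventually_lt_of_limsup_lt hM)).limsup_eq

theorem liminf_coe_eq_zero_of_isLittleO (hfg : f =o[l] g) (hf : ∀ᶠ i in l, 0 ≤ f i)
    (hg : ∀ᶠ i in l, 0 ≤ g i) (hinf : liminf (fun i => (g i : EReal)) l ≠ ⊤) :
    liminf (fun i => (f i : EReal)) l = 0 := by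
  obtain ⟨M, hM, -⟩ := EReal.lt_iff_exists_real_btwn.1 (lt_top_iff_ne_top.2 hinf)
  -- `f` tends to `0` along the subfilter on which `g` stays below `M`.
  let l' := l ⊓ 𝓟 {i | (g i : EReal) < M}
  have hl' : l' ≤ l := inf_le_left
  have : l'.NeBot := frequently_mem_iff_neBot.1 (frequently_lt_of_liminf_lt (h := hM))
  have hlim : Tendsto (fun i => (f i : EReal)) l' (𝓝 0) :=
    tendsto_coe_zero_of_isLittleO_of_eventually_lt (hfg.mono hl') (hg.filter_mono hl')
      (eventually_inf_principal.2 (.of_forall fun _ => id))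
  apply le_antisymm
  · exact (liminf_le_liminf_of_le hl').trans_eq hlim.liminf_eq
  · exact le_liminf_of_le (h := hf.mono fun _ => EReal.coe_nonneg.2)

theorem isLittleO_sum_rpow {κ : Type*} {s : α → Finset κ} {a : α → κ → ℝ}
    (ha : ∀ i, ∀ k ∈ s i, 0 ≤ a i k)
    (hlim : ∀ δ : ℝ, 0 < δ → ∀ᶠ i in l, ∀ k ∈ s i, a i k < δ)
    {p q : ℝ} (hp : 0 ≤ p) (hpq : p < q) :
    (fun i => ∑ k ∈ s i, a i k ^ q) =o[l] fun i => ∑ k ∈ s i, a i k ^ p := by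
  have hsub : 0 < q - p := sub_pos.2 hpq
  have hnonneg (r : ℝ) (i : α) : 0 ≤ ∑ k ∈ s i, a i k ^ r :=
    sum_nonneg fun k hk => Real.rpow_nonneg (ha i k hk) r
  refine isLittleO_iff.2 fun ε hε => ?_
  filter_upwards [hlim (ε ^ (q - p)⁻¹) (Real.rpow_pos_of_pos hε _)] with i hi
  rw [Real.norm_of_nonneg (hnonneg q i), Real.norm_of_nonneg (hnonneg p i), mul_sum]
  refine sum_le_sum fun k hk => ?_
  have hsmall : a i k ^ (q - p) ≤ ε :=
    (Real.le_rpow_inv_iff_of_pos (ha i k hk) hε.le hsub).1 (hi k hk).le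
  calc a i k ^ q = a i k ^ (q - p) * a i k ^ p := by
        rw [← Real.rpow_add_of_nonneg (ha i k hk) hsub.le hp, sub_add_cancel]
    _ ≤ ε * a i k ^ p := mul_le_mul_of_nonneg_right hsmall (Real.rpow_nonneg (ha i k hk) p)

end LittleO

section DyadicPoints

theorem eventually_dist_dyadic_lt {E : Type*} [PseudoMetricSpace E] {x : ℝ → E}
    (hx : ContinuousOn x (Set.Icc 0 1)) {δ : ℝ} (hδ : 0 < δ) :
    ∀ᶠ n : ℕ in atTop, ∀ k ∈ range (2 ^ n),
      dist (x (((k : ℝ) + 1) / 2 ^ n)) (x ((k : ℝ) / 2 ^ n)) < δ := by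
  obtain ⟨η, hη, hmod⟩ := Metric.uniformContinuousOn_iff.1
    (isCompact_Icc.uniformContinuousOn_of_continuous hx) δ hδ
  have hmesh : Tendsto (fun n : ℕ => ((2 : ℝ) ^ n)⁻¹) atTop (𝓝 0) :=
    tendsto_inv_atTop_zero.comp (tendsto_pow_atTop_atTop_of_one_lt one_lt_two)
  filter_upwards [hmesh.eventually_lt_const hη] with n hn k hk
  have hk' : (k : ℝ) + 1 ≤ 2 ^ n := by exact_mod_cast mem_range.1 hk
  refine hmod _ (unitInterval.div_mem (by positivity) (by positivity) hk')
    _ (unitInterval.div_mem (by positivity) (by positivity) (by linarith)) ?_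
  rwa [Real.dist_eq, ← sub_div, add_sub_cancel_left, one_div, abs_of_pos (by positivity)]

theorem floor_mul_two_pow_le {s : ℝ} (hs : s ≤ 1) (n : ℕ) : ⌊s * 2 ^ n⌋₊ ≤ 2 ^ n := by
  refine Nat.floor_le_of_le ?_
  push_cast
  exact mul_le_of_le_one_left (by positivity) hs

theorem tendsto_comp_dyadic_floor {E : Type*} [TopologicalSpace E] {x : ℝ → E}
    (hx : ContinuousOn x (Set.Icc 0 1)) {s : ℝ} (hs : s ∈ Set.Icc (0 : ℝ) 1) :
    Tendsto (fun n : ℕ => x ((⌊s * 2 ^ n⌋₊ : ℝ) / 2 ^ n)) atTop (𝓝 (x s)) := by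
  have hlim : Tendsto (fun n : ℕ => (⌊s * 2 ^ n⌋₊ : ℝ) / 2 ^ n) atTop (𝓝 s) :=
    (tendsto_nat_floor_mul_div_atTop hs.1).comp (tendsto_pow_atTop_atTop_of_one_lt one_lt_two)
  have hmem (n : ℕ) : (⌊s * 2 ^ n⌋₊ : ℝ) / 2 ^ n ∈ Set.Icc (0 : ℝ) 1 :=
    unitInterval.div_mem (by positivity) (by positivity)
      (by exact_mod_cast floor_mul_two_pow_le hs.2 n)
  exact (hx s hs).tendsto.comp (tendsto_nhdsWithin_iff.2 ⟨hlim, .of_forall hmem⟩)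

end DyadicPoints

section DyadicVariation

variable {x : ℝ → ℝ} {p q : ℝ}

theorem dyadicVar_nonneg (x : ℝ → ℝ) (p : ℝ) (n : ℕ) : 0 ≤ dyadicVar x p n :=
  sum_nonneg fun _ _ => Real.rpow_nonneg (abs_nonneg _) _

theorem dyadicVar_isLittleO (hx : ContinuousOn x (Set.Icc 0 1)) (hp : 0 ≤ p) (hpq : p < q) :
    dyadicVar x q =o[atTop] dyadicVar x p :=
  isLittleO_sum_rpow (fun _ _ _ => abs_nonneg _) (fun _ => eventually_dist_dyadic_lt hx) hp hpq

theorem abs_sub_le_dyadicVar_one (x : ℝ → ℝ) {m n : ℕ} (hm : m ≤ 2 ^ n) :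
    |x ((m : ℝ) / 2 ^ n) - x 0| ≤ dyadicVar x 1 n := by
  let y (k : ℕ) : ℝ := x ((k : ℝ) / 2 ^ n)
  calc |x ((m : ℝ) / 2 ^ n) - x 0|
      = dist (y 0) (y m) := by simp only [y, Nat.cast_zero, zero_div, Real.dist_eq, abs_sub_comm]
    _ ≤ ∑ k ∈ range m, dist (y k) (y (k + 1)) := dist_le_range_sum_dist y m
    _ ≤ ∑ k ∈ range (2 ^ n), dist (y k) (y (k + 1)) :=
        sum_le_sum_of_subset_of_nonneg (range_mono hm) fun _ _ _ => dist_nonneg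
    _ = dyadicVar x 1 n := by
        simp only [y, dyadicVar, Real.rpow_one, Nat.cast_add_one, Real.dist_eq, abs_sub_comm]

theorem Nonconstant.exists_ne_apply_zero (hnc : Nonconstant x) :
    ∃ s ∈ Set.Icc (0 : ℝ) 1, x s ≠ x 0 := by
  obtain ⟨s, hs, t, ht, hst⟩ := hnc
  by_contra! hconst
  exact hst ((hconst s hs).trans (hconst t ht).symm)

theorem one_isBigO_dyadicVar_one (hx : ContinuousOn x (Set.Icc 0 1)) (hnc : Nonconstant x) :
    (fun _ => (1 : ℝ)) =O[atTop] dyadicVar x 1 := by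
  obtain ⟨s, hs, hs0⟩ := hnc.exists_ne_apply_zero
  have hne : x s - x 0 ≠ 0 := sub_ne_zero.2 hs0
  calc (fun _ => (1 : ℝ))
      =O[atTop] fun _ : ℕ => x s - x 0 := isBigO_const_const 1 hne atTop
    _ =O[atTop] fun n => x ((⌊s * 2 ^ n⌋₊ : ℝ) / 2 ^ n) - x 0 :=
        ((isEquivalent_const_iff_tendsto hne).2
          ((tendsto_comp_dyadic_floor hx hs).sub_const _)).isBigO_symm
    _ =O[atTop] dyadicVar x 1 := .of_norm_le fun n =>
        abs_sub_le_dyadicVar_one x (floor_mul_two_pow_le hs.2 n)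

theorem tendsto_dyadicVar_atTop (hx : ContinuousOn x (Set.Icc 0 1)) (hnc : Nonconstant x)
    (hp : 0 ≤ p) (hp1 : p < 1) : Tendsto (dyadicVar x p) atTop atTop := by
  have hnorm : Tendsto (fun n => ‖dyadicVar x p n‖) atTop atTop :=
    (isLittleO_const_left_of_ne one_ne_zero).1
      ((one_isBigO_dyadicVar_one hx hnc).trans_isLittleO (dyadicVar_isLittleO hx hp hp1))
  simpa only [Real.norm_of_nonneg (dyadicVar_nonneg x p _)] using hnorm

end DyadicVariation

theorem stmt0 (x : ℝ → ℝ) (hx : ContinuousOn x (Set.Icc 0 1)) (hnc : Nonconstant x) :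
    (sSup ((fun p : ℝ => (p : EReal)) ''
        {p : ℝ | 0 < p ∧ liminf (fun n => ((dyadicVar x p n : ℝ) : EReal)) atTop = ⊤}) =
      sInf ((fun p : ℝ => (p : EReal)) ''
        {p : ℝ | 1 ≤ p ∧ liminf (fun n => ((dyadicVar x p n : ℝ) : EReal)) atTop = 0})) ∧
    (sSup ((fun p : ℝ => (p : EReal)) ''
        {p : ℝ | 0 < p ∧ limsup (fun n => ((dyadicVar x p n : ℝ) : EReal)) atTop = ⊤}) =
      sInf ((fun p : ℝ => (p : EReal)) ''
        {p : ℝ | 1 ≤ p ∧ limsup (fun n => ((dyadicVar x p n : ℝ) : EReal)) atTop = 0})) := by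
  have htop {p : ℝ} (hp : 0 < p) (hp1 : p < 1) :
      Tendsto (fun n => (dyadicVar x p n : EReal)) atTop (𝓝 ⊤) :=
    EReal.tendsto_coe_nhds_top_iff.2 (tendsto_dyadicVar_atTop hx hnc hp.le hp1)
  have hlittle {p q : ℝ} (hp : 1 ≤ p) (hpq : p < q) :
      dyadicVar x q =o[atTop] dyadicVar x p :=
    dyadicVar_isLittleO hx (zero_le_one.trans hp) hpq
  have hnonneg (p : ℝ) : ∀ᶠ n in atTop, 0 ≤ dyadicVar x p n :=
    .of_forall (dyadicVar_nonneg x p)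
  constructor
  · exact sSup_eq_top_eq_sInf_eq_zero_of_jump one_pos
      (fun p hp hp1 => (htop hp hp1).liminf_eq)
      (fun p q hp hpq => liminf_coe_eq_zero_of_isLittleO (hlittle hp hpq) (hnonneg q) (hnonneg p))
  · exact sSup_eq_top_eq_sInf_eq_zero_of_jump one_pos
      (fun p hp hp1 => (htop hp hp1).limsup_eq)
      (fun p q hp hpq => limsup_coe_eq_zero_of_isLittleO (hlittle hp hpq) (hnonneg p))
end
end

section
/- Let x : [0,1] → ℝ be a continuous function with Faber–Schauder coefficients θ_{m,k}. Consider the conditions: (a) there exists a nondecreasing subexponential function γ₁ : ℕ → [1,∞) such that for all sufficiently large m, max_{0≤k≤2^m−1} |θ_{m,k}| ≤ γ₁(m) · min_{0≤k≤2^m−1} |θ_{m,k}|; (b) there exist ν ∈ ℕ₀ and a nondecreasing subexponential function γ₂ : ℕ → [1,∞) such that for all sufficiently large m ≥ ν, max_{0≤k≤2^{m−ν}−1} Σ_{j=2^ν k}^{2^ν(k+1)−1} θ²_{m,j} ≤ γ₂(m) · min_{0≤k≤2^{m−ν}−1} Σ_{j=2^ν k}^{2^ν(k+1)−1} θ²_{m,j}.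 Then (a) implies (b), and (b) implies that the Faber–Schauder coefficients of x satisfy the reverse Jensen condition. -/
/-!
(a) is (b) with blocks of length one, after squaring. Comparability of the blocks of a generation
bounds each `θ_{m,k}²` by a subexponential multiple of the mean of `θ_{m,·}²` over its generation.
Summing over `m < n`, the functions `f_n(k) = ∑_{m<n} 2^m θ²_{m,⌊2^{m-n+1}k⌋}` satisfy
`f_n ≤ γ(n) s_n²` uniformly in `k`, while the mean of `f_n` over `k < 2^{n-1}` is exactly `s_n²`.
A nonnegative function bounded by `K` times its mean `S` satisfies the reverse Jensen inequality:
`mean (f^q)` is at most `(K S)^q`, and it is at least `S^q` if `q ≥ 1` (Jensen), and at least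
`mean f * (K S)^(q-1) = K^(q-1) S^q` if `q ≤ 1`. As `q = p/2 ≥ 1/2`, the factor `K^q` suffices on
both sides.
-/

open Filter Finset

noncomputable section

/-- `x` admits the Hurst roughness exponent `H ∈ (0,1]`. -/
def HasHurstExponent (x : ℝ → ℝ) (H : ℝ) : Prop :=
  0 < H ∧ H ≤ 1 ∧
  (∀ p : ℝ, 1 / H < p → Tendsto (dyadicVar x p) atTop (nhds 0)) ∧
  (∀ p : ℝ, 0 < p → p < 1 / H → Tendsto (dyadicVar x p) atTop atTop)

/-- Faber–Schauder coefficient `θ_{m,k}` of `x`. -/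
def fsCoeff (x : ℝ → ℝ) (m k : ℕ) : ℝ :=
  2 ^ ((m : ℝ) / 2) *
    (2 * x ((2 * (k : ℝ) + 1) / 2 ^ (m + 1)) - x ((k : ℝ) / 2 ^ m) - x (((k : ℝ) + 1) / 2 ^ m))

/-- `s_n = (∑_{m<n} ∑_{k<2^m} θ_{m,k}²)^{1/2}`. -/
def sSeq (x : ℝ → ℝ) (n : ℕ) : ℝ :=
  Real.sqrt (∑ m ∈ Finset.range n, ∑ k ∈ Finset.range (2 ^ m), fsCoeff x m k ^ 2)

/-- `ξ_n = (1/n) log₂ s_n`. -/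
def xiSeq (x : ℝ → ℝ) (n : ℕ) : ℝ := Real.logb 2 (sSeq x n) / n

/-- A nondecreasing function `ϱ : ℕ → [1,∞)` is subexponential if `(1/n) log ϱ(n) → 0`. -/
def Subexponential (ϱ : ℕ → ℝ) : Prop :=
  Monotone ϱ ∧ (∀ n, 1 ≤ ϱ n) ∧ Tendsto (fun n : ℕ => Real.log (ϱ n) / n) atTop (nhds 0)

/-- The quantity `2^{-(n-1)} ∑_{k<2^{n-1}} (∑_{m<n} 2^m θ²_{m,⌊2^{m-n+1}k⌋})^{p/2}`;
note that `⌊2^{m-n+1}k⌋ = k / 2^{n-1-m}` (natural number division). -/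
def RJquantity (x : ℝ → ℝ) (p : ℝ) (n : ℕ) : ℝ :=
  (∑ k ∈ Finset.range (2 ^ (n - 1)),
      (∑ m ∈ Finset.range n, 2 ^ m * fsCoeff x m (k / 2 ^ (n - 1 - m)) ^ 2) ^ (p / 2)) /
    2 ^ (n - 1)

/-- The reverse Jensen condition on the Faber–Schauder coefficients of `x`. -/
def ReverseJensen (x : ℝ → ℝ) : Prop :=
  ∀ p : ℝ, 1 ≤ p → ∃ np : ℕ, ∃ ϱ : ℕ → ℝ, Subexponential ϱ ∧
    ∀ n : ℕ, np ≤ n →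
      (ϱ n)⁻¹ * sSeq x n ^ p ≤ RJquantity x p n ∧ RJquantity x p n ≤ ϱ n * sSeq x n ^ p

/-- Condition (a): the absolute values of the Faber–Schauder coefficients in each
generation are comparable up to a subexponential factor. -/
def CondA (x : ℝ → ℝ) : Prop :=
  ∃ γ₁ : ℕ → ℝ, Subexponential γ₁ ∧ ∃ M : ℕ, ∀ m : ℕ, M ≤ m →
    (Finset.range (2 ^ m)).sup' (Finset.nonempty_range_iff.mpr (by positivity))
        (fun k => |fsCoeff x m k|) ≤
      γ₁ m * (Finset.range (2 ^ m)).inf' (Finset.nonempty_range_iff.mpr (by positivity))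
        (fun k => |fsCoeff x m k|)

/-- Condition (b): blockwise sums of squared Faber–Schauder coefficients in each
generation are comparable up to a subexponential factor. -/
def CondB (x : ℝ → ℝ) : Prop :=
  ∃ ν : ℕ, ∃ γ₂ : ℕ → ℝ, Subexponential γ₂ ∧ ∃ M : ℕ, ∀ m : ℕ, ν ≤ m → M ≤ m →
    (Finset.range (2 ^ (m - ν))).sup' (Finset.nonempty_range_iff.mpr (by positivity))
        (fun k => ∑ j ∈ Finset.Ico (2 ^ ν * k) (2 ^ ν * (k + 1)), fsCoeff x m j ^ 2) ≤
      γ₂ m * (Finset.range (2 ^ (m - ν))).inf' (Finset.nonempty_range_iff.mpr (by positivity))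
        (fun k => ∑ j ∈ Finset.Ico (2 ^ ν * k) (2 ^ ν * (k + 1)), fsCoeff x m j ^ 2)

open scoped BigOperators

namespace Subexponential

lemma const {C : ℝ} (hC : 1 ≤ C) : Subexponential fun _ => C :=
  ⟨monotone_const, fun _ => hC, tendsto_const_div_atTop_nhds_zero_nat _⟩

variable {ϱ σ : ℕ → ℝ}

lemma pos (hϱ : Subexponential ϱ) (n : ℕ) : 0 < ϱ n :=
  one_pos.trans_le (hϱ.2.1 n)

lemma mul (hϱ : Subexponential ϱ) (hσ : Subexponential σ) :
    Subexponential fun n => ϱ n * σ n := by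
  refine ⟨fun a b hab => ?_, fun n => one_le_mul_of_one_le_of_one_le (hϱ.2.1 n) (hσ.2.1 n), ?_⟩
  · exact mul_le_mul (hϱ.1 hab) (hσ.1 hab) (hσ.pos a).le (hϱ.pos b).le
  · simpa only [Real.log_mul (hϱ.pos _).ne' (hσ.pos _).ne', add_div, add_zero]
      using hϱ.2.2.add hσ.2.2

lemma rpow (hϱ : Subexponential ϱ) {q : ℝ} (hq : 0 ≤ q) : Subexponential fun n => ϱ n ^ q := by
  refine ⟨fun a b hab => ?_, fun n => Real.one_le_rpow (hϱ.2.1 n) hq, ?_⟩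
  · exact Real.rpow_le_rpow (hϱ.pos a).le (hϱ.1 hab) hq
  · simpa only [Real.log_rpow (hϱ.pos _), mul_div_assoc, mul_zero] using hϱ.2.2.const_mul q

end Subexponential

lemma sup'_le_mul_inf'_iff {ι α : Type*} [MulZeroClass α] [LinearOrder α] [PosMulMono α]
    {s : Finset ι} (hs : s.Nonempty) {f : ι → α} {c : α} (hc : 0 ≤ c) :
    s.sup' hs f ≤ c * s.inf' hs f ↔ ∀ i ∈ s, ∀ j ∈ s, f i ≤ c * f j := by
  constructor
  · intro h i hi j hj
    exact (le_sup' f hi).trans (h.trans (mul_le_mul_of_nonneg_left (inf'_le f hj) hc))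
  · intro h
    obtain ⟨j, hj, hmin⟩ := exists_mem_eq_inf' hs f
    exact hmin ▸ sup'_le hs f fun i hi => h i hi j hj

section MeanInequalities

variable {ι : Type*} {s : Finset ι} {f : ι → ℝ} {B K q : ℝ}

lemma expect_rpow_le_rpow (hs : s.Nonempty) (hf : ∀ i ∈ s, 0 ≤ f i) (hfB : ∀ i ∈ s, f i ≤ B)
    (hq : 0 ≤ q) : 𝔼 i ∈ s, f i ^ q ≤ B ^ q :=
  expect_le hs fun i hi => Real.rpow_le_rpow (hf i hi) (hfB i hi) hq

lemma rpow_expect_le_expect_rpow (hs : s.Nonempty) (hf : ∀ i ∈ s, 0 ≤ f i) (hq : 1 ≤ q) :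
    (𝔼 i ∈ s, f i) ^ q ≤ 𝔼 i ∈ s, f i ^ q := by
  have hcard : (#s : ℝ) ≠ 0 := Nat.cast_ne_zero.mpr hs.card_ne_zero
  have jensen := Real.rpow_arith_mean_le_arith_mean_rpow s (fun _ => (#s : ℝ)⁻¹) f
    (fun _ _ => by positivity) (by simp [hcard]) hf hq
  simpa only [expect_eq_sum_div_card, div_eq_inv_mul, mul_sum] using jensen

lemma mul_rpow_sub_one_le_rpow {a b : ℝ} (ha : 0 ≤ a) (hab : a ≤ b) (hq₀ : 0 < q) (hq₁ : q ≤ 1) :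
    a * b ^ (q - 1) ≤ a ^ q := by
  rcases ha.eq_or_lt with rfl | ha
  · rw [zero_mul, Real.zero_rpow hq₀.ne']
  · calc a * b ^ (q - 1) ≤ a * a ^ (q - 1) :=
          mul_le_mul_of_nonneg_left (Real.rpow_le_rpow_of_nonpos ha hab (sub_nonpos.mpr hq₁)) ha.le
      _ = a ^ q := by rw [Real.rpow_sub_one ha.ne', mul_div_cancel₀ _ ha.ne']

lemma rpow_sub_one_mul_rpow_expect_le_expect_rpow (hf : ∀ i ∈ s, 0 ≤ f i) (hK : 0 ≤ K)
    (hfK : ∀ i ∈ s, f i ≤ K * 𝔼 j ∈ s, f j) (hq₀ : 0 < q) (hq₁ : q ≤ 1) :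
    K ^ (q - 1) * (𝔼 i ∈ s, f i) ^ q ≤ 𝔼 i ∈ s, f i ^ q := by
  set S := 𝔼 i ∈ s, f i with hS
  have hS₀ : 0 ≤ S := expect_nonneg hf
  calc K ^ (q - 1) * S ^ q
      = S * (K * S) ^ (q - 1) := by
        rw [Real.mul_rpow hK hS₀, mul_left_comm, ← Real.rpow_one_add' hS₀ (by linarith),
          add_sub_cancel]
    _ = 𝔼 i ∈ s, f i * (K * S) ^ (q - 1) := by rw [hS, expect_mul]
    _ ≤ 𝔼 i ∈ s, f i ^ q :=
        expect_le_expect fun i hi => mul_rpow_sub_one_le_rpow (hf i hi) (hfK i hi) hq₀ hq₁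

lemma inv_rpow_mul_rpow_expect_le_expect_rpow (hs : s.Nonempty) (hf : ∀ i ∈ s, 0 ≤ f i)
    (hK : 1 ≤ K) (hfK : ∀ i ∈ s, f i ≤ K * 𝔼 j ∈ s, f j) (hq : 1 / 2 ≤ q) :
    (K ^ q)⁻¹ * (𝔼 i ∈ s, f i) ^ q ≤ 𝔼 i ∈ s, f i ^ q := by
  have hK₀ : 0 ≤ K := zero_le_one.trans hK
  have hSq : 0 ≤ (𝔼 i ∈ s, f i) ^ q := Real.rpow_nonneg (expect_nonneg hf) q
  rcases le_total 1 q with hq₁ | hq₁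
  · have hKq : (K ^ q)⁻¹ ≤ 1 := inv_le_one_of_one_le₀ (Real.one_le_rpow hK (by linarith))
    exact (mul_le_of_le_one_left hSq hKq).trans (rpow_expect_le_expect_rpow hs hf hq₁)
  · have hKq : (K ^ q)⁻¹ ≤ K ^ (q - 1) := by
      rw [← Real.rpow_neg hK₀]
      exact Real.rpow_le_rpow_of_exponent_le hK (by linarith)
    exact (mul_le_mul_of_nonneg_right hKq hSq).trans
      (rpow_sub_one_mul_rpow_expect_le_expect_rpow hf hK₀ hfK (by linarith) hq₁)

end MeanInequalities

section Blocks

/-- The sum of the sequence `f` over its `k`-th block of length `b`; the sums compared in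
condition (b) are the case `b = 2 ^ ν`. -/
def blockSum {M : Type*} [AddCommMonoid M] (f : ℕ → M) (b k : ℕ) : M :=
  ∑ j ∈ Ico (b * k) (b * (k + 1)), f j

lemma sum_blockSum {M : Type*} [AddCommMonoid M] (f : ℕ → M) (b a : ℕ) :
    ∑ k ∈ range a, blockSum f b k = ∑ j ∈ range (b * a), f j := by
  induction a with
  | zero => simp
  | succ a ih =>
    rw [sum_range_succ, ih, blockSum, sum_range_add_sum_Ico _ (Nat.mul_le_mul_left b a.le_succ)]

lemma blockSum_comp_div {M : Type*} [AddCommMonoid M] (g : ℕ → M) (b k : ℕ) :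
    blockSum (fun j => g (j / b)) b k = b • g k := by
  have hdiv : ∀ j ∈ Ico (b * k) (b * (k + 1)), g (j / b) = g k := fun j hj => by
    obtain ⟨hlo, hhi⟩ := mem_Ico.mp hj
    rw [Nat.div_eq_of_lt_le (mul_comm b k ▸ hlo) (mul_comm b (k + 1) ▸ hhi)]
  rw [blockSum, sum_congr rfl hdiv, sum_const, Nat.card_Ico, ← Nat.mul_sub, Nat.add_sub_cancel_left,
    mul_one]

lemma le_blockSum_div {f : ℕ → ℝ} (hf : ∀ j, 0 ≤ f j) {b : ℕ} (hb : 0 < b) (j : ℕ) :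
    f j ≤ blockSum f b (j / b) :=
  single_le_sum (fun i _ => hf i)
    (mem_Ico.mpr ⟨Nat.mul_div_le j b, Nat.lt_mul_div_succ j hb⟩)

lemma expect_blockSum (f : ℕ → ℝ) (b a : ℕ) :
    𝔼 k ∈ range a, blockSum f b k = b * 𝔼 j ∈ range (b * a), f j := by
  rcases eq_or_ne b 0 with rfl | hb
  · simp [blockSum]
  · simp only [expect_eq_sum_div_card, sum_blockSum, card_range, Nat.cast_mul]
    field_simp

lemma expect_comp_div (g : ℕ → ℝ) {b : ℕ} (hb : 0 < b) (a : ℕ) :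
    𝔼 k ∈ range (b * a), g (k / b) = 𝔼 j ∈ range a, g j := by
  have hb' : (b : ℝ) ≠ 0 := Nat.cast_ne_zero.mpr hb.ne'
  refine mul_left_cancel₀ hb' ?_
  rw [← expect_blockSum (fun k => g (k / b)), mul_expect]
  simp only [blockSum_comp_div g b, nsmul_eq_mul]

lemma le_mul_expect_of_blockSum_le {f : ℕ → ℝ} (hf : ∀ j, 0 ≤ f j) {a b : ℕ} {c : ℝ}
    (hblock : ∀ i ∈ range a, ∀ k ∈ range a, blockSum f b i ≤ c * blockSum f b k)
    {j : ℕ} (hj : j < b * a) :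
    f j ≤ b * c * 𝔼 i ∈ range (b * a), f i := by
  have hb : 0 < b := pos_of_mul_pos_left (j.zero_le.trans_lt hj) a.zero_le
  have hja : j / b ∈ range a := mem_range.mpr (Nat.div_lt_of_lt_mul hj)
  calc f j ≤ blockSum f b (j / b) := le_blockSum_div hf hb j
    _ ≤ 𝔼 k ∈ range a, c * blockSum f b k := le_expect ⟨_, hja⟩ (hblock _ hja)
    _ = b * c * 𝔼 i ∈ range (b * a), f i := by
        rw [← mul_expect, expect_blockSum]
        ring

end Blocks

section FaberSchauder

variable {x : ℝ → ℝ}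

theorem CondA.condB (h : CondA x) : CondB x := by
  obtain ⟨γ, hγ, M, hM⟩ := h
  refine ⟨0, fun n => γ n * γ n, hγ.mul hγ, M, fun m _ hm => ?_⟩
  have habs := (sup'_le_mul_inf'_iff _ (hγ.pos m).le).mp (hM m hm)
  refine (sup'_le_mul_inf'_iff _ (mul_nonneg (hγ.pos m).le (hγ.pos m).le)).mpr ?_
  intro i hi j hj
  simpa only [pow_zero, one_mul, Nat.Ico_succ_singleton, sum_singleton, mul_pow, sq_abs, sq (γ m)]
    using pow_le_pow_left₀ (abs_nonneg _) (habs i hi j hj) 2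

/-- The mean of `θ_{m,k}²` over the `2^m` coefficients of generation `m`. -/
def meanSq (x : ℝ → ℝ) (m : ℕ) : ℝ :=
  𝔼 k ∈ range (2 ^ m), fsCoeff x m k ^ 2

/-- The inner sum `f_n(k) = ∑_{m<n} 2^m θ²_{m,⌊2^{m-n+1}k⌋}` of the reverse Jensen condition, with
the same encoding of the floor as in `RJquantity`. -/
def levelSum (x : ℝ → ℝ) (n k : ℕ) : ℝ :=
  ∑ m ∈ range n, 2 ^ m * fsCoeff x m (k / 2 ^ (n - 1 - m)) ^ 2

/-- Every squared Faber–Schauder coefficient is at most a subexponential multiple of the mean of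
its generation. This is the consequence of condition (b) from which the reverse Jensen condition
follows. -/
def MeanDominated (x : ℝ → ℝ) : Prop :=
  ∃ γ : ℕ → ℝ, Subexponential γ ∧
    ∀ m, ∀ k < 2 ^ m, fsCoeff x m k ^ 2 ≤ γ m * meanSq x m

lemma meanSq_nonneg (x : ℝ → ℝ) (m : ℕ) : 0 ≤ meanSq x m :=
  expect_nonneg fun _ _ => sq_nonneg _

lemma levelSum_nonneg (x : ℝ → ℝ) (n k : ℕ) : 0 ≤ levelSum x n k :=
  sum_nonneg fun _ _ => by positivity

lemma two_pow_mul_meanSq (x : ℝ → ℝ) (m : ℕ) :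
    2 ^ m * meanSq x m = ∑ k ∈ range (2 ^ m), fsCoeff x m k ^ 2 := by
  rw [meanSq, ← card_mul_expect, card_range, Nat.cast_pow, Nat.cast_ofNat]

lemma fsCoeff_sq_le_two_pow_mul_meanSq (x : ℝ → ℝ) {m k : ℕ} (hk : k < 2 ^ m) :
    fsCoeff x m k ^ 2 ≤ 2 ^ m * meanSq x m := by
  rw [two_pow_mul_meanSq]
  exact single_le_sum (f := fun k => fsCoeff x m k ^ 2) (fun _ _ => sq_nonneg _) (mem_range.mpr hk)

theorem CondB.meanDominated (h : CondB x) : MeanDominated x := by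
  obtain ⟨ν, γ, hγ, M, hM⟩ := h
  -- The factor `2 ^ max M ν` absorbs the generations to which (b) does not apply.
  refine ⟨fun m => 2 ^ max M ν * γ m,
    (Subexponential.const (one_le_pow₀ one_le_two)).mul hγ, fun m k hk => ?_⟩
  have hmean := meanSq_nonneg x m
  have hγ₀ := (hγ.pos m).le
  rcases lt_or_ge m (max M ν) with hlt | hge
  · calc fsCoeff x m k ^ 2 ≤ 2 ^ m * 1 * meanSq x m := by
          rw [mul_one]
          exact fsCoeff_sq_le_two_pow_mul_meanSq x hk
      _ ≤ 2 ^ max M ν * γ m * meanSq x m := by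
          gcongr
          exacts [one_le_two, hγ.2.1 m]
  · obtain ⟨hMm, hνm⟩ := max_le_iff.mp hge
    have hblock := (sup'_le_mul_inf'_iff _ hγ₀).mp (hM m hνm hMm)
    have hsplit : 2 ^ ν * 2 ^ (m - ν) = 2 ^ m := pow_mul_pow_sub 2 hνm
    have hle := le_mul_expect_of_blockSum_le (fun j => sq_nonneg (fsCoeff x m j)) hblock
      (hsplit ▸ hk)
    rw [hsplit, Nat.cast_pow, Nat.cast_ofNat] at hle
    calc fsCoeff x m k ^ 2 ≤ 2 ^ ν * γ m * meanSq x m := hle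
      _ ≤ 2 ^ max M ν * γ m * meanSq x m := by
          gcongr
          exacts [one_le_two, le_max_right M ν]

lemma sSeq_sq (x : ℝ → ℝ) (n : ℕ) : sSeq x n ^ 2 = ∑ m ∈ range n, 2 ^ m * meanSq x m := by
  simp only [two_pow_mul_meanSq]
  exact Real.sq_sqrt (sum_nonneg fun _ _ => sum_nonneg fun _ _ => sq_nonneg _)

lemma sSeq_rpow (x : ℝ → ℝ) (n : ℕ) (p : ℝ) : sSeq x n ^ p = (sSeq x n ^ 2) ^ (p / 2) := by
  have hs : 0 ≤ sSeq x n := Real.sqrt_nonneg _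
  rw [← Real.rpow_natCast_mul hs, Nat.cast_ofNat, mul_div_cancel₀ p two_ne_zero]

lemma RJquantity_eq_expect (x : ℝ → ℝ) (p : ℝ) (n : ℕ) :
    RJquantity x p n = 𝔼 k ∈ range (2 ^ (n - 1)), levelSum x n k ^ (p / 2) := by
  rw [expect_eq_sum_div_card, card_range, Nat.cast_pow, Nat.cast_ofNat]
  rfl

lemma expect_levelSum (x : ℝ → ℝ) (n : ℕ) :
    𝔼 k ∈ range (2 ^ (n - 1)), levelSum x n k = sSeq x n ^ 2 := by
  simp only [levelSum, sSeq_sq]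
  rw [expect_sum_comm]
  refine sum_congr rfl fun m hm => ?_
  have hsplit : 2 ^ (n - 1) = 2 ^ (n - 1 - m) * 2 ^ m :=
    (pow_sub_mul_pow 2 (Nat.le_sub_one_of_lt (mem_range.mp hm))).symm
  rw [← mul_expect, hsplit,
    expect_comp_div (fun j => fsCoeff x m j ^ 2) (Nat.two_pow_pos _), meanSq]

lemma levelSum_le {γ : ℕ → ℝ} (hmono : Monotone γ)
    (hγ : ∀ m, ∀ k < 2 ^ m, fsCoeff x m k ^ 2 ≤ γ m * meanSq x m)
    {n k : ℕ} (hk : k < 2 ^ (n - 1)) : levelSum x n k ≤ γ n * sSeq x n ^ 2 := by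
  rw [sSeq_sq, mul_sum]
  refine sum_le_sum fun m hm => ?_
  have hmn : m < n := mem_range.mp hm
  have hk' : k / 2 ^ (n - 1 - m) < 2 ^ m := by
    refine Nat.div_lt_of_lt_mul ?_
    rwa [pow_sub_mul_pow 2 (Nat.le_sub_one_of_lt hmn)]
  calc 2 ^ m * fsCoeff x m (k / 2 ^ (n - 1 - m)) ^ 2
      ≤ 2 ^ m * (γ n * meanSq x m) := by
        refine mul_le_mul_of_nonneg_left ((hγ m _ hk').trans ?_) (by positivity)
        exact mul_le_mul_of_nonneg_right (hmono hmn.le) (meanSq_nonneg x m)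
    _ = γ n * (2 ^ m * meanSq x m) := mul_left_comm _ _ _

theorem MeanDominated.reverseJensen (h : MeanDominated x) : ReverseJensen x := by
  obtain ⟨γ, hγ, hdom⟩ := h
  intro p hp
  refine ⟨0, fun n => γ n ^ (p / 2), hγ.rpow (by linarith), fun n _ => ?_⟩
  have hne : (range (2 ^ (n - 1))).Nonempty := nonempty_range_iff.mpr (by positivity)
  have hnonneg : ∀ k ∈ range (2 ^ (n - 1)), 0 ≤ levelSum x n k := fun k _ => levelSum_nonneg x n k
  have hle : ∀ k ∈ range (2 ^ (n - 1)), levelSum x n k ≤ γ n * sSeq x n ^ 2 :=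
    fun k hk => levelSum_le hγ.1 hdom (mem_range.mp hk)
  rw [RJquantity_eq_expect, sSeq_rpow]
  constructor
  · rw [← expect_levelSum] at hle ⊢
    exact inv_rpow_mul_rpow_expect_le_expect_rpow hne hnonneg (hγ.2.1 n) hle (by linarith)
  · rw [← Real.mul_rpow (hγ.pos n).le (sq_nonneg _)]
    exact expect_rpow_le_rpow hne hnonneg hle (by linarith)

end FaberSchauder

theorem stmt4_general (x : ℝ → ℝ) : (CondA x → CondB x) ∧ (CondB x → ReverseJensen x) :=
  ⟨CondA.condB, fun h => h.meanDominated.reverseJensen⟩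

theorem stmt4 (x : ℝ → ℝ) (hx : ContinuousOn x (Set.Icc 0 1)) :
    (CondA x → CondB x) ∧ (CondB x → ReverseJensen x) :=
  stmt4_general x
end
end

section
/- Let x : [0,1] → ℝ be a nonconstant continuous function that admits the Hurst roughness exponent H. For ν ∈ ℕ and n ∈ ℕ define ξ⁻_{ν,n} := (1/(2n)) log₂ Σ_{m=1}^{n−1} (1/m^ν) Σ_{k=1}^{m^ν} F̂⁻¹_m(2^{−m}⌊2^m(k−1)/m^ν⌋) and ξ⁺_{ν,n} := (1/(2n)) log₂ Σ_{m=1}^{n−1} (1/m^ν) Σ_{k=1}^{m^ν} F̂⁻¹_m(2^{−m}⌈2^m k/m^ν⌉). If for some ν ∈ ℕ the limits ξ⁻_ν := lim_{n→∞} ξ⁻_{ν,n} and ξ⁺_ν := lim_{n→∞} ξ⁺_{ν,n} exist, then 1 − ξ⁺_ν ≤ H ≤ 1 − ξ⁻_ν. -/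
/-!
Let `D_{m,k} = 2^{-m/2} θ_{m,k}` be the difference of the increments of `x` over the two halves of
the `k`-th dyadic interval of generation `m`, so that `F̂⁻¹_m` is the quantile function of the
numbers `2^m θ²_{m,k} = 4^m D²_{m,k}`. In fact `limsup ξ⁻_{ν,n} ≤ 1 - H ≤ limsup ξ⁺_{ν,n}`.

*Lower growth rate.* If `h < H`, then the `1/h`-th variation is bounded. At least a fraction
`m^{-ν}` of the generation-`m` coefficients lies at or above each quantile in `ξ⁻`, so Markov's
inequality applied to `∑_k |D_{m,k}|^p ≤ 2^p V_{m+1}^{(p)}` with `p = 1/h` bounds these quantiles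
by `4^{(1-h)m}` up to a power of `m`, whence `ξ⁻` is asymptotically at most `1 - h`.

*Upper growth rate.* The last quantile in generation `m` of `ξ⁺` is the maximum of `4^m D²_{m,k}`,
and its weight is `m^{-ν}`. If `ξ⁺` is eventually smaller than `1 - h`, this gives
`|D_{m,k}| = O(2^{-hm})` uniformly in `k`. Since the partial sums in `ξ⁺` are nondecreasing,
`h < 1`, and halving intervals carries the estimate over to the increments of `x`. Hence the
`1/h`-th variation is bounded, so `h ≤ H`.
-/

open Filter Finset

noncomputable section

open scoped Classical in
/-- Empirical distribution function `F̂_m` of the `m`-th generation squared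
Faber–Schauder coefficients. -/
def Fhat (x : ℝ → ℝ) (m : ℕ) (t : ℝ) : ℝ :=
  ((Finset.range (2 ^ m)).filter (fun k => fsCoeff x m k ^ 2 ≤ t / 2 ^ m)).card / 2 ^ m

/-- Quantile function `F̂⁻¹_m(u) = inf{t : F̂_m(t) ≥ u}`. -/
def FhatInv (x : ℝ → ℝ) (m : ℕ) (u : ℝ) : ℝ :=
  sInf {t : ℝ | u ≤ Fhat x m t}

/-- `ξ⁻_{ν,n}`. -/
def xiLow (x : ℝ → ℝ) (ν n : ℕ) : ℝ :=
  (1 / (2 * (n : ℝ))) * Real.logb 2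
    (∑ m ∈ Finset.Ico 1 n, (1 / (m : ℝ) ^ ν) *
      ∑ k ∈ Finset.Icc 1 (m ^ ν),
        FhatInv x m ((⌊(2 : ℝ) ^ m * ((k : ℝ) - 1) / (m : ℝ) ^ ν⌋ : ℝ) / 2 ^ m))

/-- `ξ⁺_{ν,n}`. -/
def xiHigh (x : ℝ → ℝ) (ν n : ℕ) : ℝ :=
  (1 / (2 * (n : ℝ))) * Real.logb 2
    (∑ m ∈ Finset.Ico 1 n, (1 / (m : ℝ) ^ ν) *
      ∑ k ∈ Finset.Icc 1 (m ^ ν),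
        FhatInv x m ((⌈(2 : ℝ) ^ m * (k : ℝ) / (m : ℝ) ^ ν⌉ : ℝ) / 2 ^ m))

/-! ### Dyadic increments and second differences -/

/-- The increment of `x` over the `k`-th dyadic interval of generation `n`; its absolute `p`-th
powers sum to `dyadicVar x p n`. -/
def dyadicIncrement (x : ℝ → ℝ) (n k : ℕ) : ℝ :=
  x (((k : ℝ) + 1) / 2 ^ n) - x ((k : ℝ) / 2 ^ n)

/-- The second difference `D_{m,k}` of `x` over the `k`-th dyadic interval of generation `m`: the
increment over its left half minus the increment over its right half. This is the Faber–Schauder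
coefficient `θ_{m,k}` without the normalization `2^{m/2}`. -/
def dyadicSecondDiff (x : ℝ → ℝ) (m k : ℕ) : ℝ :=
  dyadicIncrement x (m + 1) (2 * k) - dyadicIncrement x (m + 1) (2 * k + 1)

lemma two_mul_div_two_pow_succ (a : ℝ) (m : ℕ) : 2 * a / 2 ^ (m + 1) = a / 2 ^ m := by
  rw [pow_succ', mul_div_mul_left _ _ two_ne_zero]

lemma dyadicIncrement_succ_two_mul (x : ℝ → ℝ) (m k : ℕ) :
    dyadicIncrement x (m + 1) (2 * k) =
      x ((2 * (k : ℝ) + 1) / 2 ^ (m + 1)) - x ((k : ℝ) / 2 ^ m) := by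
  rw [dyadicIncrement, Nat.cast_mul, Nat.cast_two, two_mul_div_two_pow_succ]

lemma dyadicIncrement_succ_two_mul_add_one (x : ℝ → ℝ) (m k : ℕ) :
    dyadicIncrement x (m + 1) (2 * k + 1) =
      x (((k : ℝ) + 1) / 2 ^ m) - x ((2 * (k : ℝ) + 1) / 2 ^ (m + 1)) := by
  rw [dyadicIncrement, ← two_mul_div_two_pow_succ]
  push_cast
  ring_nf

lemma dyadicIncrement_eq_add (x : ℝ → ℝ) (m k : ℕ) :
    dyadicIncrement x m k =
      dyadicIncrement x (m + 1) (2 * k) + dyadicIncrement x (m + 1) (2 * k + 1) := by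
  rw [dyadicIncrement_succ_two_mul, dyadicIncrement_succ_two_mul_add_one, dyadicIncrement]
  ring

lemma fsCoeff_eq_mul_dyadicSecondDiff (x : ℝ → ℝ) (m k : ℕ) :
    fsCoeff x m k = 2 ^ ((m : ℝ) / 2) * dyadicSecondDiff x m k := by
  rw [fsCoeff, dyadicSecondDiff, dyadicIncrement_succ_two_mul, dyadicIncrement_succ_two_mul_add_one]
  ring

lemma two_pow_mul_fsCoeff_sq (x : ℝ → ℝ) (m k : ℕ) :
    2 ^ m * fsCoeff x m k ^ 2 = 4 ^ m * dyadicSecondDiff x m k ^ 2 := by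
  have hnorm : ((2 : ℝ) ^ ((m : ℝ) / 2)) ^ 2 = 2 ^ m := by
    rw [← Real.rpow_mul_natCast zero_le_two, Nat.cast_two, div_mul_cancel₀ _ two_ne_zero,
      Real.rpow_natCast]
  rw [fsCoeff_eq_mul_dyadicSecondDiff, mul_pow, hnorm, ← mul_assoc, ← mul_pow]
  norm_num

lemma sum_range_two_mul {M : Type*} [AddCommMonoid M] (f : ℕ → M) (n : ℕ) :
    ∑ i ∈ range (2 * n), f i = ∑ i ∈ range n, (f (2 * i) + f (2 * i + 1)) := by
  induction n with
  | zero => rfl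
  | succ n ih =>
    rw [Nat.mul_succ, sum_range_succ, sum_range_succ, ih, sum_range_succ, add_assoc]

lemma abs_sub_rpow_le {p : ℝ} (hp : 0 ≤ p) (a b : ℝ) :
    |a - b| ^ p ≤ 2 ^ p * (|a| ^ p + |b| ^ p) := by
  have hmax : max |a| |b| ^ p ≤ |a| ^ p + |b| ^ p := by
    rcases max_choice |a| |b| with h | h <;> rw [h]
    · exact le_add_of_nonneg_right (by positivity)
    · exact le_add_of_nonneg_left (by positivity)
  calc |a - b| ^ p ≤ (2 * max |a| |b|) ^ p := by
        gcongr
        linarith [abs_sub a b, le_max_left |a| |b|, le_max_right |a| |b|]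
    _ = 2 ^ p * max |a| |b| ^ p := Real.mul_rpow zero_le_two (by positivity)
    _ ≤ 2 ^ p * (|a| ^ p + |b| ^ p) := by gcongr

lemma sum_abs_dyadicSecondDiff_rpow_le (x : ℝ → ℝ) {p : ℝ} (hp : 0 ≤ p) (m : ℕ) :
    ∑ k ∈ range (2 ^ m), |dyadicSecondDiff x m k| ^ p ≤ 2 ^ p * dyadicVar x p (m + 1) := by
  change _ ≤ 2 ^ p * ∑ k ∈ range (2 ^ (m + 1)), |dyadicIncrement x (m + 1) k| ^ p
  rw [pow_succ', sum_range_two_mul, mul_sum]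
  exact sum_le_sum fun k _ => abs_sub_rpow_le hp _ _

lemma abs_dyadicIncrement_succ_le (x : ℝ → ℝ) (n k : ℕ) :
    |dyadicIncrement x (n + 1) k| ≤
      (|dyadicIncrement x n (k / 2)| + |dyadicSecondDiff x n (k / 2)|) / 2 := by
  rcases Nat.even_or_odd' k with ⟨j, rfl | rfl⟩
  · have hleft : dyadicIncrement x (n + 1) (2 * j) =
        (dyadicIncrement x n j + dyadicSecondDiff x n j) / 2 := by
      rw [dyadicIncrement_eq_add x n j, dyadicSecondDiff]
      ring
    rw [Nat.mul_div_cancel_left j two_pos, hleft, abs_div, abs_two]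
    gcongr
    exact abs_add_le _ _
  · have hright : dyadicIncrement x (n + 1) (2 * j + 1) =
        (dyadicIncrement x n j - dyadicSecondDiff x n j) / 2 := by
      rw [dyadicIncrement_eq_add x n j, dyadicSecondDiff]
      ring
    rw [show (2 * j + 1) / 2 = j by omega, hright, abs_div, abs_two]
    gcongr
    exact abs_sub _ _

-- The recursion `|Δ_{n+1}| ≤ (|Δ_n| + |D_n|) / 2` only preserves a rate `β` exceeding `1/2`.
lemma exists_forall_abs_dyadicIncrement_le (x : ℝ → ℝ) {N : ℕ} {β C : ℝ} (hβ : 1 / 2 < β)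
    (hD : ∀ m, N ≤ m → ∀ k < 2 ^ m, |dyadicSecondDiff x m k| ≤ C * β ^ m) :
    ∃ K, 0 ≤ K ∧ ∀ n, N ≤ n → ∀ k < 2 ^ n, |dyadicIncrement x n k| ≤ K * β ^ n := by
  have : 0 < β := by linarith
  set K₀ := (∑ k ∈ range (2 ^ N), |dyadicIncrement x N k|) / β ^ N
  set K := max K₀ (C / (2 * β - 1))
  have hCK : C ≤ K * (2 * β - 1) := (div_le_iff₀ (by linarith)).1 (le_max_right _ _)
  refine ⟨K, le_max_of_le_left (by positivity), fun n hn => ?_⟩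
  induction n, hn using Nat.le_induction with
  | base =>
    intro k hk
    calc |dyadicIncrement x N k| ≤ ∑ k ∈ range (2 ^ N), |dyadicIncrement x N k| :=
          single_le_sum (f := fun k => |dyadicIncrement x N k|) (fun _ _ => abs_nonneg _)
            (mem_range.2 hk)
      _ = K₀ * β ^ N := (div_mul_cancel₀ _ (by positivity)).symm
      _ ≤ K * β ^ N := by gcongr; exact le_max_left _ _
  | succ n hn ih =>
    intro k hk
    have hk' : k / 2 < 2 ^ n := by rw [pow_succ] at hk; omega
    calc |dyadicIncrement x (n + 1) k|
        ≤ (|dyadicIncrement x n (k / 2)| + |dyadicSecondDiff x n (k / 2)|) / 2 :=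
          abs_dyadicIncrement_succ_le x n k
      _ ≤ (K * β ^ n + K * (2 * β - 1) * β ^ n) / 2 := by
          gcongr
          · exact ih _ hk'
          · exact (hD n hn _ hk').trans (by gcongr)
      _ = K * β ^ (n + 1) := by ring

lemma dyadicVar_one_div_le {x : ℝ → ℝ} {h K : ℝ} (hh : 0 < h) (hK : 0 ≤ K) {n : ℕ}
    (hx : ∀ k < 2 ^ n, |dyadicIncrement x n k| ≤ K * ((2 : ℝ) ^ (-h)) ^ n) :
    dyadicVar x (1 / h) n ≤ K ^ (1 / h) := by
  have hpow : (((2 : ℝ) ^ (-h)) ^ n) ^ (1 / h) = ((2 : ℝ) ^ n)⁻¹ := by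
    rw [← Real.rpow_mul_natCast zero_le_two, ← Real.rpow_mul zero_le_two, ← Real.rpow_natCast,
      ← Real.rpow_neg zero_le_two]
    congr 1
    field_simp
  calc dyadicVar x (1 / h) n = ∑ k ∈ range (2 ^ n), |dyadicIncrement x n k| ^ (1 / h) := rfl
    _ ≤ ∑ _k ∈ range (2 ^ n), (K * ((2 : ℝ) ^ (-h)) ^ n) ^ (1 / h) :=
      sum_le_sum fun k hk =>
        Real.rpow_le_rpow (abs_nonneg _) (hx k (mem_range.1 hk)) (by positivity)
    _ = K ^ (1 / h) := by
      rw [sum_const, card_range, nsmul_eq_mul, Real.mul_rpow hK (by positivity), hpow]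
      push_cast
      field_simp

/-! ### The empirical quantile function -/

lemma Fhat_eq_one_sub_card (x : ℝ → ℝ) (m : ℕ) (t : ℝ) :
    Fhat x m t = 1 - #{k ∈ range (2 ^ m) | t < 4 ^ m * dyadicSecondDiff x m k ^ 2} / 2 ^ m := by
  have hle (k : ℕ) : fsCoeff x m k ^ 2 ≤ t / 2 ^ m ↔
      ¬ t < 4 ^ m * dyadicSecondDiff x m k ^ 2 := by
    rw [le_div_iff₀' (by positivity), two_pow_mul_fsCoeff_sq, not_lt]
  have hcard := card_filter_add_card_filter_not (s := range (2 ^ m))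
    (fun k => t < 4 ^ m * dyadicSecondDiff x m k ^ 2)
  rw [card_range] at hcard
  simp only [Fhat, hle]
  rw [eq_sub_iff_add_eq', ← add_div, div_eq_one_iff_eq (by positivity)]
  exact_mod_cast hcard

lemma Fhat_nonneg (x : ℝ → ℝ) (m : ℕ) (t : ℝ) : 0 ≤ Fhat x m t := by
  unfold Fhat
  positivity

lemma Fhat_of_neg (x : ℝ → ℝ) (m : ℕ) {t : ℝ} (ht : t < 0) : Fhat x m t = 0 := by
  rw [Fhat_eq_one_sub_card, filter_true_of_mem fun k _ => ht.trans_le (by positivity), card_range,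
    Nat.cast_pow, Nat.cast_two, div_self (by positivity), sub_self]

lemma one_le_Fhat_iff {x : ℝ → ℝ} {m : ℕ} {t : ℝ} :
    1 ≤ Fhat x m t ↔ ∀ k < 2 ^ m, 4 ^ m * dyadicSecondDiff x m k ^ 2 ≤ t := by
  rw [Fhat_eq_one_sub_card, le_sub_self_iff, div_le_iff₀ (by positivity), zero_mul]
  norm_cast
  simp [filter_eq_empty_iff]

lemma FhatInv_nonneg (x : ℝ → ℝ) (m : ℕ) (u : ℝ) : 0 ≤ FhatInv x m u := by
  rcases le_or_gt u 0 with hu | hu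
  · -- The infimum over all of `ℝ` has the junk value `0`.
    have huniv : {t : ℝ | u ≤ Fhat x m t} = Set.univ :=
      Set.eq_univ_of_forall fun t => hu.trans (Fhat_nonneg x m t)
    rw [FhatInv, huniv, Real.sInf_univ]
  · refine Real.sInf_nonneg fun t ht => le_of_not_gt fun hneg => hu.not_ge ?_
    exact (Fhat_of_neg x m hneg) ▸ ht

lemma FhatInv_le {x : ℝ → ℝ} {m : ℕ} {u t : ℝ} (ht : 0 ≤ t) (hu : u ≤ Fhat x m t) :
    FhatInv x m u ≤ t := by
  by_cases hbdd : BddBelow {t : ℝ | u ≤ Fhat x m t}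
  · exact csInf_le hbdd hu
  · rwa [FhatInv, Real.sInf_of_not_bddBelow hbdd]

lemma four_pow_mul_dyadicSecondDiff_sq_le_FhatInv_one (x : ℝ → ℝ) {m k : ℕ} (hk : k < 2 ^ m) :
    4 ^ m * dyadicSecondDiff x m k ^ 2 ≤ FhatInv x m 1 := by
  refine le_csInf ?_ fun t ht => one_le_Fhat_iff.1 ht k hk
  refine ⟨∑ j ∈ range (2 ^ m), 4 ^ m * dyadicSecondDiff x m j ^ 2, one_le_Fhat_iff.2 fun j hj => ?_⟩
  exact single_le_sum (f := fun j => 4 ^ m * dyadicSecondDiff x m j ^ 2)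
    (fun _ _ => by positivity) (mem_range.2 hj)

lemma card_filter_lt_mul_rpow_le_sum {ι : Type*} (s : Finset ι) (f : ι → ℝ) {a p : ℝ} (ha : 0 ≤ a)
    (hp : 0 ≤ p) : #{i ∈ s | a < |f i|} * a ^ p ≤ ∑ i ∈ s, |f i| ^ p :=
  calc #{i ∈ s | a < |f i|} * a ^ p = ∑ i ∈ s with a < |f i|, a ^ p := by
        rw [sum_const, nsmul_eq_mul]
    _ ≤ ∑ i ∈ s with a < |f i|, |f i| ^ p :=
        sum_le_sum fun i hi => Real.rpow_le_rpow ha (mem_filter.1 hi).2.le hp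
    _ ≤ ∑ i ∈ s, |f i| ^ p :=
        sum_le_sum_of_subset_of_nonneg (filter_subset _ _) fun _ _ _ => by positivity

lemma FhatInv_le_of_sum_rpow_le {x : ℝ → ℝ} {m : ℕ} {p K δ u : ℝ} (hp : 0 < p) (hK : 0 < K)
    (hδ : 0 < δ) (hsum : ∑ k ∈ range (2 ^ m), |dyadicSecondDiff x m k| ^ p ≤ K) (hu : u ≤ 1 - δ) :
    FhatInv x m u ≤ 4 ^ m * (K / (2 ^ m * δ)) ^ (2 / p) := by
  set a : ℝ := (K / (2 ^ m * δ)) ^ (1 / p)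
  have ha : 0 < a := by positivity
  have hap : a ^ p = K / (2 ^ m * δ) := by
    rw [← Real.rpow_mul (by positivity), one_div_mul_cancel hp.ne', Real.rpow_one]
  have ha2 : a ^ 2 = (K / (2 ^ m * δ)) ^ (2 / p) := by
    rw [← Real.rpow_mul_natCast (by positivity), Nat.cast_two, one_div_mul_eq_div]
  have hlt (k : ℕ) : 4 ^ m * a ^ 2 < 4 ^ m * dyadicSecondDiff x m k ^ 2 ↔
      a < |dyadicSecondDiff x m k| := by
    rw [mul_lt_mul_iff_right₀ (by positivity), sq_lt_sq, abs_of_pos ha]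
  have hcard : (#{k ∈ range (2 ^ m) | a < |dyadicSecondDiff x m k|} : ℝ) ≤ δ * 2 ^ m := by
    have hmarkov := (card_filter_lt_mul_rpow_le_sum (range (2 ^ m)) (dyadicSecondDiff x m)
      ha.le hp.le).trans hsum
    rwa [hap, ← mul_div_assoc, div_le_iff₀ (by positivity), mul_comm, mul_le_mul_iff_right₀ hK,
      mul_comm (2 ^ m)] at hmarkov
  rw [← ha2]
  refine FhatInv_le (by positivity) (hu.trans ?_)
  simp only [Fhat_eq_one_sub_card, hlt]
  gcongr
  exact div_le_of_le_mul₀ (by positivity) hδ.le hcard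

/-! ### Averages of quantiles -/

/-- The generation-`m` summand of `ξ⁻`: the average of the quantiles at the left endpoints, rounded
down to multiples of `2^{-m}`, of the `m^ν` equal parts of `[0,1]`. -/
def lowQuantileMean (x : ℝ → ℝ) (ν m : ℕ) : ℝ :=
  (1 / (m : ℝ) ^ ν) * ∑ k ∈ Finset.Icc 1 (m ^ ν),
    FhatInv x m ((⌊(2 : ℝ) ^ m * ((k : ℝ) - 1) / (m : ℝ) ^ ν⌋ : ℝ) / 2 ^ m)

/-- The generation-`m` summand of `ξ⁺`: the average of the quantiles at the right endpoints, rounded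
up to multiples of `2^{-m}`, of the `m^ν` equal parts of `[0,1]`. -/
def highQuantileMean (x : ℝ → ℝ) (ν m : ℕ) : ℝ :=
  (1 / (m : ℝ) ^ ν) * ∑ k ∈ Finset.Icc 1 (m ^ ν),
    FhatInv x m ((⌈(2 : ℝ) ^ m * (k : ℝ) / (m : ℝ) ^ ν⌉ : ℝ) / 2 ^ m)

lemma lowQuantileMean_nonneg (x : ℝ → ℝ) (ν m : ℕ) : 0 ≤ lowQuantileMean x ν m :=
  mul_nonneg (by positivity) (sum_nonneg fun _ _ => FhatInv_nonneg _ _ _)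

lemma highQuantileMean_nonneg (x : ℝ → ℝ) (ν m : ℕ) : 0 ≤ highQuantileMean x ν m :=
  mul_nonneg (by positivity) (sum_nonneg fun _ _ => FhatInv_nonneg _ _ _)

lemma floor_mul_sub_one_div_le {c k N : ℝ} (hc : 0 < c) (hN : 0 < N) (hk : k ≤ N) :
    (⌊c * (k - 1) / N⌋ : ℝ) / c ≤ 1 - 1 / N :=
  calc (⌊c * (k - 1) / N⌋ : ℝ) / c ≤ c * (k - 1) / N / c := by gcongr; exact Int.floor_le _
    _ = (k - 1) / N := by field_simp
    _ ≤ (N - 1) / N := by gcongr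
    _ = 1 - 1 / N := by rw [sub_div, div_self hN.ne']

lemma lowQuantileMean_le_of_sum_rpow_le {x : ℝ → ℝ} {m : ℕ} {p K : ℝ} (hp : 0 < p) (hK : 0 < K)
    (hm : m ≠ 0) (hsum : ∑ k ∈ range (2 ^ m), |dyadicSecondDiff x m k| ^ p ≤ K) (ν : ℕ) :
    lowQuantileMean x ν m ≤ 4 ^ m * (K * (m : ℝ) ^ ν / 2 ^ m) ^ (2 / p) := by
  have hmν : (0 : ℝ) < (m : ℝ) ^ ν := by positivity
  have hquantile (k : ℕ) (hk : k ∈ Finset.Icc 1 (m ^ ν)) :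
      FhatInv x m ((⌊(2 : ℝ) ^ m * ((k : ℝ) - 1) / (m : ℝ) ^ ν⌋ : ℝ) / 2 ^ m) ≤
        4 ^ m * (K * (m : ℝ) ^ ν / 2 ^ m) ^ (2 / p) := by
    have hkN : (k : ℝ) ≤ (m : ℝ) ^ ν := by exact_mod_cast (Finset.mem_Icc.1 hk).2
    refine (FhatInv_le_of_sum_rpow_le hp hK (one_div_pos.2 hmν) hsum
      (floor_mul_sub_one_div_le (by positivity) hmν hkN)).trans_eq ?_
    congr 2
    field_simp
  rw [lowQuantileMean, one_div, inv_mul_le_iff₀ hmν]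
  simpa using sum_le_card_nsmul _ _ _ hquantile

lemma four_pow_mul_dyadicSecondDiff_sq_le (x : ℝ → ℝ) (ν : ℕ) {m k : ℕ} (hm : m ≠ 0)
    (hk : k < 2 ^ m) :
    4 ^ m * dyadicSecondDiff x m k ^ 2 ≤ (m : ℝ) ^ ν * highQuantileMean x ν m := by
  have hmν : (m : ℝ) ^ ν ≠ 0 := by positivity
  -- The quantile level of the last summand `k = m^ν` is `1`.
  have hlevel : (⌈(2 : ℝ) ^ m * ((m ^ ν : ℕ) : ℝ) / (m : ℝ) ^ ν⌉ : ℝ) / 2 ^ m = 1 := by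
    rw [Nat.cast_pow, mul_div_cancel_right₀ _ hmν, div_eq_one_iff_eq (by positivity)]
    exact_mod_cast Int.ceil_natCast (R := ℝ) (2 ^ m)
  have hlast : FhatInv x m 1 ≤ ∑ k ∈ Finset.Icc 1 (m ^ ν),
      FhatInv x m ((⌈(2 : ℝ) ^ m * (k : ℝ) / (m : ℝ) ^ ν⌉ : ℝ) / 2 ^ m) := by
    rw [← hlevel]
    exact single_le_sum (f := fun k : ℕ =>
      FhatInv x m ((⌈(2 : ℝ) ^ m * (k : ℝ) / (m : ℝ) ^ ν⌉ : ℝ) / 2 ^ m))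
      (fun _ _ => FhatInv_nonneg _ _ _)
      (Finset.right_mem_Icc.2 (Nat.one_le_pow _ _ (Nat.pos_of_ne_zero hm)))
  rw [highQuantileMean, ← mul_assoc, mul_one_div_cancel hmν, one_mul]
  exact (four_pow_mul_dyadicSecondDiff_sq_le_FhatInv_one x hk).trans hlast

/-! ### Exponential growth rates -/

/-- The base-`4` exponential growth rate `(2n)⁻¹ log₂ S_n` of a sequence of nonnegative numbers, of
which `ξ⁻_{ν,n}` and `ξ⁺_{ν,n}` are instances. It has the junk value `0` where `S_n = 0`. -/
def growthRate (S : ℕ → ℝ) (n : ℕ) : ℝ := (1 / (2 * (n : ℝ))) * Real.logb 2 (S n)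

lemma xiLow_eq_growthRate (x : ℝ → ℝ) (ν : ℕ) :
    xiLow x ν = growthRate fun n => ∑ m ∈ Finset.Ico 1 n, lowQuantileMean x ν m := rfl

lemma xiHigh_eq_growthRate (x : ℝ → ℝ) (ν : ℕ) :
    xiHigh x ν = growthRate fun n => ∑ m ∈ Finset.Ico 1 n, highQuantileMean x ν m := rfl

lemma growthRate_le_iff {S : ℕ → ℝ} {n : ℕ} {r : ℝ} (hn : n ≠ 0) (hS : 0 < S n) :
    growthRate S n ≤ r ↔ S n ≤ ((4 : ℝ) ^ r) ^ n := by
  have hpow : ((4 : ℝ) ^ r) ^ n = 2 ^ (2 * n * r) := by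
    rw [show (4 : ℝ) = 2 ^ (2 : ℝ) by norm_num, ← Real.rpow_mul zero_le_two,
      ← Real.rpow_mul_natCast zero_le_two]
    ring_nf
  rw [growthRate, one_div, inv_mul_le_iff₀ (by positivity), hpow,
    Real.logb_le_iff_le_rpow one_lt_two hS]

lemma limsup_growthRate_le {S : ℕ → ℝ} {A c : ℝ} (hc : 0 ≤ c) (hS₀ : ∀ n, 0 ≤ S n)
    (hS : ∀ n, S n ≤ A * ((4 : ℝ) ^ c) ^ n) :
    limsup (fun n => (growthRate S n : EReal)) atTop ≤ c := by
  refine EReal.le_of_forall_lt_iff_le.1 fun r hr => ?_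
  have hcr : c < r := EReal.coe_lt_coe_iff.1 hr
  have hA : ∀ᶠ n : ℕ in atTop, A ≤ ((4 : ℝ) ^ (r - c)) ^ n :=
    (tendsto_pow_atTop_atTop_of_one_lt
      (Real.one_lt_rpow (by norm_num) (sub_pos.2 hcr))).eventually_ge_atTop A
  refine limsup_le_of_le (h := ?_)
  filter_upwards [hA, eventually_ne_atTop 0] with n hAn hn
  rw [EReal.coe_le_coe_iff]
  rcases (hS₀ n).eq_or_lt with hSn | hSn
  · simpa [growthRate, ← hSn] using hc.trans hcr.le
  · refine (growthRate_le_iff hn hSn).2 ?_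
    calc S n ≤ A * ((4 : ℝ) ^ c) ^ n := hS n
      _ ≤ ((4 : ℝ) ^ (r - c)) ^ n * ((4 : ℝ) ^ c) ^ n := by gcongr
      _ = ((4 : ℝ) ^ r) ^ n := by
        rw [← mul_pow, ← Real.rpow_add (by norm_num), sub_add_cancel]

lemma eventually_le_pow_of_limsup_growthRate_lt {S : ℕ → ℝ} {r : ℝ} (hS₀ : ∀ n, 0 ≤ S n)
    (hr : limsup (fun n => (growthRate S n : EReal)) atTop < r) :
    ∀ᶠ n in atTop, S n ≤ ((4 : ℝ) ^ r) ^ n := by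
  filter_upwards [eventually_lt_of_limsup_lt hr, eventually_ne_atTop 0] with n hlt hn
  rcases (hS₀ n).eq_or_lt with hSn | hSn
  · rw [← hSn]
    positivity
  · exact (growthRate_le_iff hn hSn).1 (EReal.coe_lt_coe_iff.1 hlt).le

lemma limsup_growthRate_nonneg {S : ℕ → ℝ} (hS₀ : ∀ n, 0 ≤ S n) (hS : Monotone S) :
    0 ≤ limsup (fun n => (growthRate S n : EReal)) atTop := by
  by_contra! hneg
  obtain ⟨r, hlt, hr⟩ := EReal.lt_iff_exists_real_btwn.1 hneg
  obtain ⟨N, hN⟩ := (eventually_lt_of_limsup_lt hneg).exists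
  have hSN : 0 < S N := (hS₀ N).lt_of_ne fun h => by simp [growthRate, ← h] at hN
  have htendsto : Tendsto (fun n : ℕ => ((4 : ℝ) ^ r) ^ n) atTop (nhds 0) :=
    tendsto_pow_atTop_nhds_zero_of_lt_one (by positivity)
      (Real.rpow_lt_one_of_one_lt_of_neg (by norm_num) (by exact_mod_cast hr))
  refine hSN.not_ge (ge_of_tendsto htendsto ?_)
  filter_upwards [eventually_le_pow_of_limsup_growthRate_lt hS₀ hlt, eventually_ge_atTop N]
    with n hn hNn using (hS hNn).trans hn

lemma exists_forall_pow_le_mul_pow (ν : ℕ) {q : ℝ} (hq : 1 < q) :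
    ∃ C : ℝ, 0 < C ∧ ∀ m : ℕ, (m : ℝ) ^ ν ≤ C * q ^ m := by
  obtain ⟨C, hC⟩ := (tendsto_pow_const_div_const_pow_of_one_lt ν hq).bddAbove_range
  refine ⟨max C 1, by positivity, fun m => ?_⟩
  rw [← div_le_iff₀ (by positivity)]
  exact (hC ⟨m, rfl⟩).trans (le_max_left _ _)

lemma sum_Ico_one_le_mul_pow {f : ℕ → ℝ} {A q : ℝ} (hA : 0 ≤ A) (hq : 1 < q)
    (hf : ∀ m, m ≠ 0 → f m ≤ A * q ^ m) (n : ℕ) :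
    ∑ m ∈ Finset.Ico 1 n, f m ≤ A / (q - 1) * q ^ n := by
  have : 0 < q - 1 := sub_pos.2 hq
  calc ∑ m ∈ Finset.Ico 1 n, f m ≤ ∑ m ∈ Finset.Ico 1 n, A * q ^ m :=
        sum_le_sum fun m hm => hf m (Nat.one_le_iff_ne_zero.1 (Finset.mem_Ico.1 hm).1)
    _ ≤ ∑ m ∈ range n, A * q ^ m :=
        sum_le_sum_of_subset_of_nonneg
          (fun m hm => mem_range.2 (Finset.mem_Ico.1 hm).2) fun _ _ _ => by positivity
    _ = A * ((q ^ n - 1) / (q - 1)) := by rw [← mul_sum, geom_sum_eq hq.ne']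
    _ ≤ A * (q ^ n / (q - 1)) := by gcongr; linarith
    _ = A / (q - 1) * q ^ n := by ring

/-! ### Growth rates and dyadic variation -/

-- The gap between `h` and `g` absorbs the factor `m^ν`.
lemma exists_forall_lowQuantileMean_le {x : ℝ → ℝ} {h g : ℝ} (hh : 0 < h) (hhg : h < g)
    (hV : IsBoundedUnder (· ≤ ·) atTop (dyadicVar x (1 / g))) (ν : ℕ) :
    ∃ A, 0 ≤ A ∧ ∀ m, m ≠ 0 → lowQuantileMean x ν m ≤ A * ((4 : ℝ) ^ (1 - h)) ^ m := by
  have hg : 0 < g := hh.trans hhg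
  obtain ⟨K, hK⟩ := hV.bddAbove_range
  set L : ℝ := 2 ^ (1 / g) * max K 1
  obtain ⟨C, hC, hCm⟩ := exists_forall_pow_le_mul_pow ν
    (Real.one_lt_rpow one_lt_two (div_pos (sub_pos.2 hhg) hg))
  refine ⟨(L * C) ^ (2 * g), by positivity, fun m hm => ?_⟩
  have hsum : ∑ k ∈ range (2 ^ m), |dyadicSecondDiff x m k| ^ (1 / g) ≤ L :=
    (sum_abs_dyadicSecondDiff_rpow_le x (by positivity) m).trans
      (mul_le_mul_of_nonneg_left ((hK ⟨m + 1, rfl⟩).trans (le_max_left _ _)) (by positivity))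
  have hbase : (((2 : ℝ) ^ ((g - h) / g)) ^ m / 2 ^ m) ^ (2 * g) = ((4 : ℝ) ^ (-h)) ^ m := by
    rw [← div_pow, ← Real.rpow_sub_one two_ne_zero, ← Real.rpow_natCast_mul (by positivity),
      mul_comm (m : ℝ), Real.rpow_mul_natCast (by positivity), ← Real.rpow_mul zero_le_two,
      show (4 : ℝ) = 2 ^ (2 : ℝ) by norm_num, ← Real.rpow_mul zero_le_two]
    congr 2
    field_simp
    ring
  calc lowQuantileMean x ν m ≤ 4 ^ m * (L * (m : ℝ) ^ ν / 2 ^ m) ^ (2 / (1 / g)) :=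
        lowQuantileMean_le_of_sum_rpow_le (by positivity) (by positivity) hm hsum ν
    _ ≤ 4 ^ m * (L * (C * ((2 : ℝ) ^ ((g - h) / g)) ^ m) / 2 ^ m) ^ (2 * g) := by
        rw [div_div_eq_mul_div, div_one]
        gcongr
        exact hCm m
    _ = (L * C) ^ (2 * g) * (4 ^ m * (((2 : ℝ) ^ ((g - h) / g)) ^ m / 2 ^ m) ^ (2 * g)) := by
        rw [← mul_assoc, mul_div_assoc, Real.mul_rpow (by positivity) (by positivity)]
        ring
    _ = (L * C) ^ (2 * g) * ((4 : ℝ) ^ (1 - h)) ^ m := by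
        rw [hbase, ← mul_pow, sub_eq_add_neg, Real.rpow_add (by norm_num), Real.rpow_one]

lemma limsup_xiLow_le {x : ℝ → ℝ} {h g : ℝ} (hh₀ : 0 < h) (hh₁ : h < 1) (hhg : h < g)
    (hV : IsBoundedUnder (· ≤ ·) atTop (dyadicVar x (1 / g))) (ν : ℕ) :
    limsup (fun n => (xiLow x ν n : EReal)) atTop ≤ (1 - h : ℝ) := by
  obtain ⟨A, hA, hmean⟩ := exists_forall_lowQuantileMean_le hh₀ hhg hV ν
  rw [xiLow_eq_growthRate]
  exact limsup_growthRate_le (sub_nonneg.2 hh₁.le)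
    (fun n => sum_nonneg fun m _ => lowQuantileMean_nonneg x ν m)
    (sum_Ico_one_le_mul_pow hA (Real.one_lt_rpow (by norm_num) (sub_pos.2 hh₁)) hmean)

lemma exists_forall_abs_dyadicSecondDiff_le {x : ℝ → ℝ} {ν : ℕ} {h r : ℝ} (hr : r < 1 - h)
    (hsum : ∀ᶠ n in atTop, ∑ m ∈ Finset.Ico 1 n, highQuantileMean x ν m ≤ ((4 : ℝ) ^ r) ^ n) :
    ∃ N C, ∀ m, N ≤ m → ∀ k < 2 ^ m, |dyadicSecondDiff x m k| ≤ C * ((2 : ℝ) ^ (-h)) ^ m := by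
  obtain ⟨N, hN⟩ := eventually_atTop.1 hsum
  obtain ⟨C, hC, hCm⟩ := exists_forall_pow_le_mul_pow ν
    (Real.one_lt_rpow (x := 4) (by norm_num) (sub_pos.2 hr))
  have hbase : (4 : ℝ) ^ (1 - h - r) * 4 ^ r = 4 * ((2 : ℝ) ^ (-h)) ^ 2 := by
    rw [← Real.rpow_add (by norm_num), sub_add_cancel, sub_eq_add_neg,
      Real.rpow_add (by norm_num), Real.rpow_one, Real.rpow_pow_comm zero_le_two]
    norm_num
  refine ⟨N + 1, √(C * 4 ^ r), fun m hm k hk => abs_le_of_sq_le_sq ?_ (by positivity)⟩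
  have hm₀ : m ≠ 0 := by omega
  refine le_of_mul_le_mul_left ?_ (pow_pos (zero_lt_four' ℝ) m)
  calc 4 ^ m * dyadicSecondDiff x m k ^ 2 ≤ (m : ℝ) ^ ν * highQuantileMean x ν m :=
        four_pow_mul_dyadicSecondDiff_sq_le x ν hm₀ hk
    _ ≤ (m : ℝ) ^ ν * ∑ j ∈ Finset.Ico 1 (m + 1), highQuantileMean x ν j := by
        gcongr
        exact single_le_sum (fun j _ => highQuantileMean_nonneg x ν j)
          (Finset.mem_Ico.2 ⟨Nat.one_le_iff_ne_zero.2 hm₀, m.lt_succ_self⟩)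
    _ ≤ C * ((4 : ℝ) ^ (1 - h - r)) ^ m * ((4 : ℝ) ^ r) ^ (m + 1) :=
        mul_le_mul (hCm m) (hN _ (by omega))
          (sum_nonneg fun j _ => highQuantileMean_nonneg x ν j) (by positivity)
    _ = C * 4 ^ r * ((4 : ℝ) ^ (1 - h - r) * 4 ^ r) ^ m := by ring
    _ = 4 ^ m * (√(C * 4 ^ r) * ((2 : ℝ) ^ (-h)) ^ m) ^ 2 := by
        rw [hbase, mul_pow √_, Real.sq_sqrt (by positivity)]
        ring

lemma isBoundedUnder_dyadicVar_of_limsup_xiHigh_lt {x : ℝ → ℝ} {ν : ℕ} {h : ℝ} (hh : 0 < h)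
    (hlt : limsup (fun n => (xiHigh x ν n : EReal)) atTop < (1 - h : ℝ)) :
    IsBoundedUnder (· ≤ ·) atTop (dyadicVar x (1 / h)) := by
  rw [xiHigh_eq_growthRate] at hlt
  have hnonneg (n : ℕ) : 0 ≤ ∑ m ∈ Finset.Ico 1 n, highQuantileMean x ν m :=
    sum_nonneg fun m _ => highQuantileMean_nonneg x ν m
  have hmono : Monotone fun n => ∑ m ∈ Finset.Ico 1 n, highQuantileMean x ν m := fun a b hab =>
    sum_le_sum_of_subset_of_nonneg (Finset.Ico_subset_Ico_right hab)
      fun m _ _ => highQuantileMean_nonneg x ν m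
  have hh₁ : h < 1 :=
    sub_pos.1 (EReal.coe_pos.1 ((limsup_growthRate_nonneg hnonneg hmono).trans_lt hlt))
  obtain ⟨r, hr, hrh⟩ := EReal.lt_iff_exists_real_btwn.1 hlt
  obtain ⟨N, C, hC⟩ := exists_forall_abs_dyadicSecondDiff_le (EReal.coe_lt_coe_iff.1 hrh)
    (eventually_le_pow_of_limsup_growthRate_lt hnonneg hr)
  have hhalf : 1 / 2 < (2 : ℝ) ^ (-h) := by
    rw [one_div, ← Real.rpow_neg_one]
    exact Real.rpow_lt_rpow_of_exponent_lt one_lt_two (neg_lt_neg hh₁)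
  obtain ⟨K, hK, hinc⟩ := exists_forall_abs_dyadicIncrement_le x hhalf hC
  exact isBoundedUnder_of_eventually_le
    (eventually_atTop.2 ⟨N, fun n hn => dyadicVar_one_div_le hh hK (hinc n hn)⟩)

theorem stmt8_general (x : ℝ → ℝ) (H : ℝ) (hH : HasHurstExponent x H) (ν : ℕ) :
    limsup (fun n => (xiLow x ν n : EReal)) atTop ≤ (1 - H : ℝ) ∧
      (1 - H : ℝ) ≤ limsup (fun n => (xiHigh x ν n : EReal)) atTop := by
  obtain ⟨hH₀, hH₁, hzero, htop⟩ := hH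
  constructor
  · refine EReal.le_of_forall_lt_iff_le.1 fun r hr => ?_
    have hrH : 1 - r < H := sub_lt_comm.1 (EReal.coe_lt_coe_iff.1 hr)
    obtain ⟨h, hh, hhH⟩ := exists_between (max_lt hrH hH₀)
    obtain ⟨hrh, hh₀⟩ := max_lt_iff.1 hh
    obtain ⟨g, hhg, hgH⟩ := exists_between hhH
    have hV := (hzero (1 / g) (one_div_lt_one_div_of_lt (hh₀.trans hhg) hgH)).isBoundedUnder_le
    exact (limsup_xiLow_le hh₀ (hhH.trans_le hH₁) hhg hV ν).trans
      (EReal.coe_le_coe_iff.2 (sub_lt_comm.1 hrh).le)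
  · by_contra! hlt
    obtain ⟨r, hr, hrH⟩ := EReal.lt_iff_exists_real_btwn.1 hlt
    have hHr : H < 1 - r := lt_sub_comm.1 (EReal.coe_lt_coe_iff.1 hrH)
    have hV := isBoundedUnder_dyadicVar_of_limsup_xiHigh_lt (hH₀.trans hHr)
      (by rwa [sub_sub_cancel])
    exact not_isBoundedUnder_of_tendsto_atTop
      (htop _ (one_div_pos.2 (hH₀.trans hHr)) (one_div_lt_one_div_of_lt hH₀ hHr)) hV

theorem stmt8 (x : ℝ → ℝ) (hx : ContinuousOn x (Set.Icc 0 1)) (hnc : Nonconstant x)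
    (H : ℝ) (hH : HasHurstExponent x H) (ν : ℕ) (hν : 1 ≤ ν) (ξm ξp : ℝ)
    (hm : Tendsto (fun n => xiLow x ν n) atTop (nhds ξm))
    (hp : Tendsto (fun n => xiHigh x ν n) atTop (nhds ξp)) :
    1 - ξp ≤ H ∧ H ≤ 1 - ξm := by
  have hlimsup := stmt8_general x H hH ν
  rw [(EReal.tendsto_coe.2 hm).limsup_eq, (EReal.tendsto_coe.2 hp).limsup_eq,
    EReal.coe_le_coe_iff, EReal.coe_le_coe_iff] at hlimsup
  exact ⟨sub_le_comm.1 hlimsup.2, le_sub_comm.1 hlimsup.1⟩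
end
end
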